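/- Let L be a language with finitely many relation symbols, all of arity at least two, and let K be the class of all finite L-structures in which every relation holds only on tuples of pairwise distinct elements. Then K is a Fraïssé class and every Fraïssé limit M of K is indivisible: for every k ≥ 1 and every coloring c : M → {0, …, k−1}, there exists an L-embedding f : M → M such that c ∘ f is constant. -/

import Mathlib

/-!
The class has free amalgamation: glue `B` and `C` along `A` and keep only the relations that come
from `B` or from `C`. Joint embedding is amalgamation over the empty structure, which embeds
everywhere because there are no nullary symbols.

For indivisibility, call `S ⊆ M` *extensive* if every quantifier-free loop-free 1-type over a
finite subset of `S` is realized by a new element of `S` (`IsExtensive`).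

* `M` itself is extensive: the one-point extension of a finite `A ⊆ M` prescribed by a type lies in
  the class, so it embeds in `M`, and by ultrahomogeneity it does so over `A`.
* If `S` is extensive then `M` embeds in `S`, by recursion along an enumeration of `M`.
* If `S` is extensive and `S ∩ V` is not, where `V` is a colour class, then some type `P` over a
  finite `A ⊆ S ∩ V` has no realization in `S ∩ V`. The set of realizations of `P` in `S \ A`
  therefore misses `V`. It is still extensive: a type over a finite set `B` of such realizations
  may be freely combined with `P`, as `A` and `B` are disjoint and, all arities being at least two,
  no relation mentions the new point only.

Induction on the number of colours occurring in `S` yields a monochromatic extensive set.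
-/

open FirstOrder FirstOrder.Language FirstOrder.Language.Structure CategoryTheory

universe u v w

namespace CDP

variable {L : FirstOrder.Language.{u, v}}

/-- `x` realizes the same quantifier-free 1-type over the empty set as `a`. -/
def SameEmptyType {M : Type*} [L.Structure M] (a x : M) : Prop :=
  ∀ {n : ℕ} (R : L.Relations n),
    RelMap R (fun _ : Fin n => x) ↔ RelMap R (fun _ : Fin n => a)

/-- All relations hold only on tuples of pairwise distinct elements. -/
def NoLoops (M : Type*) [L.Structure M] : Prop :=
  ∀ {n : ℕ} (R : L.Relations n) (t : Fin n → M), RelMap R t → Function.Injective t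

/-- `D` is an extension of `B` (via the embedding `f`) by exactly the one new vertex `v`. -/
def IsOnePointExt {B D : Type*} [L.Structure B] [L.Structure D]
    (f : B ↪[L] D) (v : D) : Prop :=
  v ∉ Set.range ⇑f ∧ ∀ d : D, d = v ∨ d ∈ Set.range ⇑f

/-- `C` is an extension of `A` (via the embedding `f`) by exactly the two new vertices `v, w`. -/
def IsTwoPointExt {A C : Type*} [L.Structure A] [L.Structure C]
    (f : A ↪[L] C) (v w : C) : Prop :=
  v ≠ w ∧ v ∉ Set.range ⇑f ∧ w ∉ Set.range ⇑f ∧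
    ∀ c : C, c = v ∨ c = w ∨ c ∈ Set.range ⇑f

/-- The quantifier-free 1-type of `v` over (the copy via `f` of) `A` in `D` equals the
quantifier-free 1-type of `u` over (the copy via `g` of) `A` in `E`; here `none` stands
for the distinguished new point. -/
def QF1Eq {A D E : Type*} [L.Structure A] [L.Structure D] [L.Structure E]
    (f : A ↪[L] D) (v : D) (g : A ↪[L] E) (u : E) : Prop :=
  ∀ {n : ℕ} (R : L.Relations n) (t : Fin n → Option A),
    RelMap R (fun i => (t i).elim v ⇑f) ↔ RelMap R (fun i => (t i).elim u ⇑g)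

/-- The substructure of `D` on (the copy of) `A ∪ {v, w}` is isomorphic to the substructure of
`E` on `A ∪ {v', w'}` by the identity on `A` together with `v ↦ v'`, `w ↦ w'`. -/
def QF2Eq {A D E : Type*} [L.Structure A] [L.Structure D] [L.Structure E]
    (f : A ↪[L] D) (v w : D) (g : A ↪[L] E) (v' w' : E) : Prop :=
  ∀ {n : ℕ} (R : L.Relations n) (t : Fin n → A ⊕ Fin 2),
    RelMap R (fun i => Sum.elim (⇑f) ![v, w] (t i)) ↔
      RelMap R (fun i => Sum.elim (⇑g) ![v', w'] (t i))

variable (K : Set (Bundled.{w} L.Structure))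

/-- The disjoint (strong) amalgamation property. -/
def DAP : Prop :=
  ∀ A B C : Bundled.{w} L.Structure, A ∈ K → B ∈ K → C ∈ K →
    ∀ (f : A ↪[L] B) (g : A ↪[L] C),
      ∃ D : Bundled.{w} L.Structure, D ∈ K ∧
        ∃ (r : B ↪[L] D) (s : C ↪[L] D),
          r.comp f = s.comp g ∧
          Set.range ⇑r ∩ Set.range ⇑s = Set.range ⇑(r.comp f)

/-- The free amalgamation property: a disjoint amalgam in which no tuple satisfying a relation
contains elements of both `range r ∖ range (r ∘ f)` and `range s ∖ range (s ∘ g)`. -/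
def FAP : Prop :=
  ∀ A B C : Bundled.{w} L.Structure, A ∈ K → B ∈ K → C ∈ K →
    ∀ (f : A ↪[L] B) (g : A ↪[L] C),
      ∃ D : Bundled.{w} L.Structure, D ∈ K ∧
        ∃ (r : B ↪[L] D) (s : C ↪[L] D),
          r.comp f = s.comp g ∧
          Set.range ⇑r ∩ Set.range ⇑s = Set.range ⇑(r.comp f) ∧
          ∀ {n : ℕ} (R : L.Relations n) (t : Fin n → D), RelMap R t →
            ¬ ((∃ i, t i ∈ Set.range ⇑r \ Set.range ⇑(r.comp f)) ∧
               (∃ j, t j ∈ Set.range ⇑s \ Set.range ⇑(s.comp g)))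

/-- The Substructure Free Amalgamation Property (SFAP). -/
def SFAP : Prop :=
  FAP K ∧
  ∀ A C : Bundled.{w} L.Structure, A ∈ K → C ∈ K →
  ∀ (iAC : A ↪[L] C) (v w : C), IsTwoPointExt iAC v w →
  ∀ B : Bundled.{w} L.Structure, B ∈ K → ∀ iAB : A ↪[L] B,
  -- σ : a quantifier-free 1-type over B realized in a member Bσ of K,
  -- with σ ↾ A = qftp(v / A)
  ∀ Bσ : Bundled.{w} L.Structure, Bσ ∈ K →
    ∀ (jσ : B ↪[L] Bσ) (vσ : Bσ), IsOnePointExt jσ vσ →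
      QF1Eq (jσ.comp iAB) vσ iAC v →
  -- τ : a quantifier-free 1-type over B realized in a member Bτ of K,
  -- with τ ↾ A = qftp(w / A)
  ∀ Bτ : Bundled.{w} L.Structure, Bτ ∈ K →
    ∀ (jτ : B ↪[L] Bτ) (wτ : Bτ), IsOnePointExt jτ wτ →
      QF1Eq (jτ.comp iAB) wτ iAC w →
  -- D extends B by one vertex v' with qftp(v'/B) = σ
  ∀ D : Bundled.{w} L.Structure, D ∈ K →
    ∀ (iBD : B ↪[L] D) (v' : D), IsOnePointExt iBD v' →
      QF1Eq iBD v' jσ vσ →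
  -- conclusion: E extends D by one vertex w' with qftp(w'/B) = τ,
  -- E ↾ (A ∪ {v', w'}) ≅ C, and E adds no other relations over D
  ∃ E : Bundled.{w} L.Structure, E ∈ K ∧
    ∃ (iDE : D ↪[L] E) (w' : E),
      IsOnePointExt iDE w' ∧
      QF1Eq (iDE.comp iBD) w' jτ wτ ∧
      QF2Eq ((iDE.comp iBD).comp iAB) (iDE v') w' iAC v w ∧
      (∀ {n : ℕ} (R : L.Relations n) (t : Fin n → E), RelMap R t →
        (∀ i, t i ∈ Set.range ⇑iDE) ∨
        (∀ i, t i = w' ∨ t i ∈ Set.range ⇑(iDE.comp iBD)) ∨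
        (∀ i, t i = w' ∨ t i = iDE v' ∨ t i ∈ Set.range ⇑((iDE.comp iBD).comp iAB)))

/-- The body of SDAP, for a given choice of witnesses `A'`, `C'` (with the connecting
embeddings): `C'` is a disjoint amalgam of `A'` and `C` over `A` extending `A'` by the two
vertices `iCC' v`, `iCC' w`, and any two 1-types over a structure `B ⊇ A'` extending the
types of these two vertices over `A'` can be realized consecutively yielding a copy of `C`
over `A`. -/
def SDAPWitness {A C : Bundled.{w} L.Structure} (iAC : A ↪[L] C) (v w : C)
    (A' C' : Bundled.{w} L.Structure) (iAA' : A ↪[L] A') (iA'C' : A' ↪[L] C')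
    (iCC' : C ↪[L] C') : Prop :=
  iA'C'.comp iAA' = iCC'.comp iAC ∧
  Set.range ⇑iA'C' ∩ Set.range ⇑iCC' = Set.range ⇑(iA'C'.comp iAA') ∧
  IsTwoPointExt iA'C' (iCC' v) (iCC' w) ∧
  ∀ B : Bundled.{w} L.Structure, B ∈ K → ∀ iA'B : A' ↪[L] B,
  ∀ Bσ : Bundled.{w} L.Structure, Bσ ∈ K →
    ∀ (jσ : B ↪[L] Bσ) (vσ : Bσ), IsOnePointExt jσ vσ →
      QF1Eq (jσ.comp iA'B) vσ iA'C' (iCC' v) →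
  ∀ Bτ : Bundled.{w} L.Structure, Bτ ∈ K →
    ∀ (jτ : B ↪[L] Bτ) (wτ : Bτ), IsOnePointExt jτ wτ →
      QF1Eq (jτ.comp iA'B) wτ iA'C' (iCC' w) →
  ∀ D : Bundled.{w} L.Structure, D ∈ K →
    ∀ (iBD : B ↪[L] D) (v'' : D), IsOnePointExt iBD v'' →
      QF1Eq iBD v'' jσ vσ →
  ∃ E : Bundled.{w} L.Structure, E ∈ K ∧
    ∃ (iDE : D ↪[L] E) (w'' : E),
      IsOnePointExt iDE w'' ∧
      QF1Eq (iDE.comp iBD) w'' jτ wτ ∧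
      QF2Eq (((iDE.comp iBD).comp iA'B).comp iAA') (iDE v'') w'' iAC v w

/-- The Substructure Disjoint Amalgamation Property (SDAP). -/
def SDAP : Prop :=
  DAP K ∧
  ∀ A C : Bundled.{w} L.Structure, A ∈ K → C ∈ K →
    ∀ (iAC : A ↪[L] C) (v w : C), IsTwoPointExt iAC v w →
      ∃ A' C' : Bundled.{w} L.Structure, A' ∈ K ∧ C' ∈ K ∧
        ∃ (iAA' : A ↪[L] A') (iA'C' : A' ↪[L] C') (iCC' : C ↪[L] C'),
          SDAPWitness K iAC v w A' C' iAA' iA'C' iCC'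

/-- A Fraïssé class: a nonempty class of finite structures, closed under isomorphism and
substructures (equivalently, under embeddability of finite structures), with the joint
embedding and amalgamation properties. -/
def IsFraisseClass : Prop :=
  K.Nonempty ∧
  (∀ M ∈ K, Finite M) ∧
  (∀ M N : Bundled.{w} L.Structure, Nonempty (M ≃[L] N) → (M ∈ K ↔ N ∈ K)) ∧
  (∀ M ∈ K, ∀ N : Bundled.{w} L.Structure, Nonempty (N ↪[L] M) → N ∈ K) ∧
  (∀ M ∈ K, ∀ N ∈ K, ∃ P ∈ K, Nonempty (M ↪[L] P) ∧ Nonempty (N ↪[L] P)) ∧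
  (∀ A B C : Bundled.{w} L.Structure, A ∈ K → B ∈ K → C ∈ K →
    ∀ (f : A ↪[L] B) (g : A ↪[L] C),
      ∃ D : Bundled.{w} L.Structure, D ∈ K ∧
        ∃ (r : B ↪[L] D) (s : C ↪[L] D), r.comp f = s.comp g)

/-- `M` is a Fraïssé limit of `K`: a countably infinite ultrahomogeneous structure whose age
(the class of finite structures embeddable in it) is `K`. -/
def IsFraisseLimitOf (M : Type w) [L.Structure M] : Prop :=
  Countable M ∧ Infinite M ∧ L.IsUltrahomogeneous M ∧
    ∀ N : Bundled.{w} L.Structure, N ∈ K ↔ (Finite N ∧ Nonempty (N ↪[L] M))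

end CDP

namespace CDP

/-! ### Free amalgamation and the Fraïssé class -/

section Class

variable {L : FirstOrder.Language.{u, v}}

theorem NoLoops.of_embedding {M N : Type*} [L.Structure M] [L.Structure N]
    (hM : NoLoops (L := L) M) (f : N ↪[L] M) : NoLoops (L := L) N := by
  intro n R t ht
  exact (hM R (f ∘ t) ((f.map_rel R t).2 ht)).of_comp

/-- In the pushout `B ⊕ (C \ g(A))`, the image of a point of `C`: the points of `g(A)` are
identified with the corresponding points of `B`. -/
noncomputable def glue {A B C : Type*} (f : A → B) (g : A → C) (c : C) :
    B ⊕ {c : C // c ∉ Set.range g} :=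
  open Classical in
  if h : c ∈ Set.range g then Sum.inl (f h.choose) else Sum.inr ⟨c, h⟩

theorem glue_apply {A B C : Type*} (f : A → B) {g : A → C} (hg : Function.Injective g) (a : A) :
    glue f g (g a) = Sum.inl (f a) := by
  have h : g a ∈ Set.range g := ⟨a, rfl⟩
  rw [glue, dif_pos h, hg h.choose_spec]

theorem glue_eq_inl {A B C : Type*} (f : A → B) {g : A → C} (hg : Function.Injective g)
    {c : C} {b : B} (h : glue f g c = Sum.inl b) : ∃ a, g a = c ∧ f a = b := by
  by_cases hc : c ∈ Set.range g
  · obtain ⟨a, rfl⟩ := hc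
    rw [glue_apply f hg] at h
    exact ⟨a, rfl, Sum.inl_injective h⟩
  · rw [glue, dif_neg hc] at h
    cases h

theorem glue_injective {A B C : Type*} {f : A → B} {g : A → C} (hf : Function.Injective f)
    (hg : Function.Injective g) : Function.Injective (glue f g) := by
  intro c d h
  by_cases hc : c ∈ Set.range g
  · obtain ⟨a, rfl⟩ := hc
    rw [glue_apply f hg] at h
    obtain ⟨a', rfl, h'⟩ := glue_eq_inl f hg h.symm
    rw [hf h']
  · by_cases hd : d ∈ Set.range g
    · obtain ⟨a, rfl⟩ := hd
      rw [glue_apply f hg] at h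
      obtain ⟨a', rfl, h'⟩ := glue_eq_inl f hg h
      rw [hf h']
    · rw [glue, glue, dif_neg hc, dif_neg hd] at h
      exact congrArg Subtype.val (Sum.inr_injective h)

/-- The structure on the free amalgam: a relation holds exactly where it holds in `B` or in `C`. -/
@[reducible] noncomputable def amalgStructure [L.IsRelational] {A B C : Type*} [L.Structure A]
    [L.Structure B] [L.Structure C] (f : A ↪[L] B) (g : A ↪[L] C) :
    L.Structure (B ⊕ {c : C // c ∉ Set.range g}) where
  funMap F := isEmptyElim F
  RelMap R t := (∃ t', t = Sum.inl ∘ t' ∧ RelMap R t') ∨ (∃ t', t = glue f g ∘ t' ∧ RelMap R t')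

theorem amalgamation [L.IsRelational] (A B C : Bundled.{w} L.Structure)
    (hB : Finite B ∧ NoLoops (L := L) B) (hC : Finite C ∧ NoLoops (L := L) C)
    (f : A ↪[L] B) (g : A ↪[L] C) :
    ∃ D : Bundled.{w} L.Structure, (Finite D ∧ NoLoops (L := L) D) ∧
      ∃ (r : B ↪[L] D) (s : C ↪[L] D), r.comp f = s.comp g := by
  obtain ⟨_, hB⟩ := hB
  obtain ⟨_, hC⟩ := hC
  let _ := amalgStructure f g
  have hs : Function.Injective (glue f g) := glue_injective f.injective g.injective
  -- the two descriptions of a tuple lying in the common part `A` agree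
  have key : ∀ {n : ℕ} (R : L.Relations n) (b : Fin n → B) (c : Fin n → C),
      Sum.inl ∘ b = glue f g ∘ c → (RelMap R b ↔ RelMap R c) := by
    intro n R b c h
    choose a ha hb using fun i => glue_eq_inl f g.injective (congrFun h i).symm
    obtain rfl : g ∘ a = c := funext ha
    obtain rfl : f ∘ a = b := funext hb
    rw [f.map_rel, g.map_rel]
  refine ⟨Bundled.of (B ⊕ {c : C // c ∉ Set.range g}), ⟨?_, ?_⟩, ?_, ?_, ?_⟩
  · change Finite (B ⊕ {c : C // c ∉ Set.range g})
    infer_instance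
  · rintro n R t (⟨t', rfl, h⟩ | ⟨t', rfl, h⟩)
    · exact Sum.inl_injective.comp (hB R t' h)
    · exact hs.comp (hC R t' h)
  · refine ⟨⟨Sum.inl, Sum.inl_injective⟩, fun F => isEmptyElim F, fun R b => ⟨?_, ?_⟩⟩
    · rintro (⟨t', h, h'⟩ | ⟨t', h, h'⟩)
      · rwa [Sum.inl_injective.comp_left h]
      · exact (key R b t' h).2 h'
    · exact fun h => Or.inl ⟨b, rfl, h⟩
  · refine ⟨⟨glue f g, hs⟩, fun F => isEmptyElim F, fun R c => ⟨?_, ?_⟩⟩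
    · rintro (⟨t', h, h'⟩ | ⟨t', h, h'⟩)
      · exact (key R t' c h.symm).1 h'
      · rwa [hs.comp_left h]
    · exact fun h => Or.inr ⟨c, rfl, h⟩
  · ext a
    exact (glue_apply f g.injective a).symm

theorem isFraisseClass [L.IsRelational] (harity : ∀ n, n < 2 → IsEmpty (L.Relations n)) :
    IsFraisseClass { N : Bundled.{w} L.Structure | Finite N ∧ NoLoops (L := L) N } := by
  let _ : L.Structure PEmpty.{w + 1} := ⟨fun F => isEmptyElim F, fun _ _ => False⟩
  have hE : Finite PEmpty.{w + 1} ∧ NoLoops (L := L) PEmpty.{w + 1} :=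
    ⟨inferInstance, fun _ _ h => h.elim⟩
  have emb : ∀ N : Bundled.{w} L.Structure, Nonempty (PEmpty.{w + 1} ↪[L] N) := by
    refine fun N => ⟨⟨⟨PEmpty.elim, fun x => x.elim⟩, fun F => isEmptyElim F, ?_⟩⟩
    intro n R t
    rcases n with _ | n
    · exact ((harity 0 (by norm_num)).false R).elim
    · exact (t 0).elim
  have her : ∀ M : Bundled.{w} L.Structure, (Finite M ∧ NoLoops (L := L) M) →
      ∀ N : Bundled.{w} L.Structure, Nonempty (N ↪[L] M) →
        (Finite N ∧ NoLoops (L := L) N) := by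
    rintro M ⟨_, hM⟩ N ⟨f⟩
    exact ⟨Finite.of_injective f f.injective, hM.of_embedding f⟩
  refine ⟨⟨Bundled.of PEmpty.{w + 1}, hE⟩, fun M hM => hM.1, ?_, her, ?_, ?_⟩
  · rintro M N ⟨e⟩
    exact ⟨fun h => her M h N ⟨e.symm.toEmbedding⟩, fun h => her N h M ⟨e.toEmbedding⟩⟩
  · intro M hM N hN
    obtain ⟨f⟩ := emb M
    obtain ⟨g⟩ := emb N
    obtain ⟨D, hD, r, s, -⟩ := amalgamation (Bundled.of PEmpty.{w + 1}) M N hM hN f g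
    exact ⟨D, hD, ⟨r⟩, ⟨s⟩⟩
  · intro A B C _ hB hC f g
    exact amalgamation A B C hB hC f g

theorem exists_some_of_arity (harity : ∀ n, n < 2 → IsEmpty (L.Relations n)) {M : Type*} {n : ℕ}
    (R : L.Relations n) {t : Fin n → Option M} (ht : Function.Injective t) :
    ∃ i m, t i = some m := by
  have hn : 2 ≤ n := by
    by_contra h
    exact (harity n (by omega)).false R
  by_contra! h
  have h0 : ∀ i, t i = none := fun i => Option.eq_none_iff_forall_ne_some.2 (h i)
  have := ht ((h0 ⟨0, by omega⟩).trans (h0 ⟨1, by omega⟩).symm)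
  simp at this

end Class

/-! ### Extensive sets -/

section Extensive

variable {L : FirstOrder.Language.{u, v}} {M : Type w} [L.Structure M]

variable (L M) in
/-- A prescription for the relations between a new point, written `none`, and points of `M`.
Only its values on injective tuples containing `none` matter. -/
abbrev PreType := ∀ n : ℕ, L.Relations n → (Fin n → Option M) → Prop

/-- All entries of the tuple other than the new point `none` belong to `A`. -/
def Over (A : Finset M) {n : ℕ} (t : Fin n → Option M) : Prop :=
  ∀ i m, t i = some m → m ∈ A

/-- `x` lies outside `A` and its quantifier-free type over `A` is the one prescribed by `P`. -/
def Realizes (A : Finset M) (P : PreType L M) (x : M) : Prop :=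
  x ∉ A ∧ ∀ (n : ℕ) (R : L.Relations n) (t : Fin n → Option M), Function.Injective t →
    (∃ i, t i = none) → Over A t → (RelMap R (fun i => (t i).getD x) ↔ P n R t)

/-- Every loop-free type over a finite subset of `S` is realized in `S` by a new point. -/
def IsExtensive (L : FirstOrder.Language.{u, v}) {M : Type w} [L.Structure M] (S : Set M) : Prop :=
  ∀ (A : Finset M) (P : PreType L M), ↑A ⊆ S → ∃ x ∈ S, Realizes A P x

/-- The one-point extension of `S` prescribed by `P`. -/
@[reducible] def extStructure [L.IsRelational] (S : L.Substructure M) (P : PreType L M) :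
    L.Structure (Option S) where
  funMap F := isEmptyElim F
  RelMap {n} R t := Function.Injective t ∧
    (((∃ i, t i = none) ∧ P n R (fun i => (t i).map Subtype.val)) ∨
      ∃ t' : Fin n → S, t = some ∘ t' ∧ RelMap R t')

theorem IsFraisseLimitOf.noLoops [L.IsRelational]
    (hM : IsFraisseLimitOf { N : Bundled.{w} L.Structure | Finite N ∧ NoLoops (L := L) N } M) :
    NoLoops (L := L) M := by
  intro n R t ht
  let S : L.Substructure M := ⟨Set.range t, fun F => isEmptyElim F⟩
  have hS : Finite S := (Set.finite_range t).to_subtype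
  have h : NoLoops (L := L) S := ((hM.2.2.2 (Bundled.of S)).2 ⟨hS, ⟨S.subtype⟩⟩).2
  let t' : Fin n → S := fun i => ⟨t i, i, rfl⟩
  have h' : Function.Injective t' := h R t' ((S.subtype.map_rel R t').1 ht)
  exact Subtype.val_injective.comp h'

theorem IsFraisseLimitOf.isExtensive_univ [L.IsRelational]
    (hM : IsFraisseLimitOf { N : Bundled.{w} L.Structure | Finite N ∧ NoLoops (L := L) N } M) :
    IsExtensive L (Set.univ : Set M) := by
  intro A P _
  have hloop : NoLoops (L := L) M := hM.noLoops
  let S : L.Substructure M := ⟨A, fun F => isEmptyElim F⟩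
  have hS : Finite S := A.finite_toSet.to_subtype
  let _ := extStructure S P
  have hT : Nonempty (Option S ↪[L] M) :=
    ((hM.2.2.2 (Bundled.of (Option S))).1 ⟨inferInstanceAs (Finite (Option S)),
      fun _ _ h => h.1⟩).2
  let g : S ↪[L] Option S := by
    refine ⟨⟨some, Option.some_injective _⟩, fun F => isEmptyElim F, fun R t => ⟨?_, ?_⟩⟩
    · rintro ⟨-, ⟨⟨i, hi⟩, -⟩ | ⟨t', h, h'⟩⟩
      · cases hi
      · rwa [(Option.some_injective _).comp_left h]
    · intro h
      exact ⟨(Option.some_injective _).comp ((hloop.of_embedding S.subtype) R t h),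
        Or.inr ⟨t, rfl, h⟩⟩
  obtain ⟨f, hf⟩ := hM.2.2.1.extend_embedding
    (Structure.fg_iff.2 ⟨Set.univ, Set.finite_univ, Substructure.closure_univ⟩) S.subtype g
  have hf' : ∀ a : S, f (some a) = a := fun a => (DFunLike.congr_fun hf a).symm
  refine ⟨f none, trivial, ?_, ?_⟩
  · intro hx
    have := f.injective (hf' ⟨f none, hx⟩)
    cases this
  · intro n R t ht hnone hover
    have : ∀ i, ∃ o : Option S, o.map Subtype.val = t i := by
      intro i
      cases h : t i with
      | none => exact ⟨none, rfl⟩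
      | some m => exact ⟨some ⟨m, hover i m h⟩, rfl⟩
    choose t' ht' using this
    have e1 : (fun i => (t i).getD (f none)) = f ∘ t' := by
      funext i
      rw [← ht' i, Function.comp_apply]
      cases t' i with
      | none => rfl
      | some a => exact (hf' a).symm
    have e2 : (fun i => (t' i).map Subtype.val) = t := funext ht'
    have hnone' : ∃ i, t' i = none := by
      obtain ⟨i, hi⟩ := hnone
      exact ⟨i, by simpa [← ht' i] using hi⟩
    have hinj : Function.Injective t' := by
      rw [← e2] at ht
      exact Function.Injective.of_comp (f := Option.map Subtype.val) ht
    rw [e1, f.map_rel]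
    constructor
    · rintro ⟨-, ⟨-, h⟩ | ⟨t'', h, -⟩⟩
      · rwa [e2] at h
      · obtain ⟨i, hi⟩ := hnone'
        rw [h] at hi
        cases hi
    · intro h
      exact ⟨hinj, Or.inl ⟨hnone', by rwa [e2]⟩⟩

/-! ### Monochromatic extensive sets -/

/-- The realizations in `S` of a type over a finite subset of `S` form an extensive set. -/
theorem IsExtensive.realizations (harity : ∀ n, n < 2 → IsEmpty (L.Relations n)) {S : Set M}
    (hS : IsExtensive L S) {A : Finset M} (P : PreType L M) (hA : ↑A ⊆ S) :
    IsExtensive L {x ∈ S | Realizes A P x} := by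
  classical
  intro B Q hB
  obtain ⟨x, hxS, hx, hreal⟩ := hS (A ∪ B) (fun n R t => if Over A t then P n R t else Q n R t) (by
    intro y hy
    rcases Finset.mem_union.1 (Finset.mem_coe.1 hy) with h | h
    · exact hA h
    · exact (hB h).1)
  rw [Finset.mem_union, not_or] at hx
  beta_reduce at hreal
  refine ⟨x, ⟨hxS, hx.1, ?_⟩, hx.2, ?_⟩
  · intro n R t ht hnone hover
    rw [hreal n R t ht hnone fun i m h => Finset.mem_union_left _ (hover i m h), if_pos hover]
  · intro n R t ht hnone hover
    rw [hreal n R t ht hnone fun i m h => Finset.mem_union_right _ (hover i m h), if_neg]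
    intro hover'
    obtain ⟨i, m, hm⟩ := exists_some_of_arity harity R ht
    exact (hB (hover i m hm)).2.1 (hover' i m hm)

theorem IsExtensive.exists_monochromatic (harity : ∀ n, n < 2 → IsEmpty (L.Relations n))
    {κ : Type*} (c : M → κ) (I : Finset κ) :
    ∀ S : Set M, IsExtensive L S → (∀ x ∈ S, c x ∈ I) →
      ∃ (T : Set M) (i : κ), IsExtensive L T ∧ ∀ x ∈ T, c x = i := by
  classical
  induction I using Finset.induction_on with
  | empty =>
    intro S hS h
    obtain ⟨x, hx, -⟩ := hS ∅ (fun _ _ _ => True) (by simp)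
    simpa using h x hx
  | insert a I _ ih =>
    intro S hS h
    by_cases hE : IsExtensive L {x ∈ S | c x = a}
    · exact ⟨_, a, hE, fun x hx => hx.2⟩
    · simp only [IsExtensive, not_forall] at hE
      obtain ⟨A, P, hA, hno⟩ := hE
      refine ih {x ∈ S | Realizes A P x} (hS.realizations harity P fun x hx => (hA hx).1) ?_
      rintro x ⟨hxS, hx⟩
      refine (Finset.mem_insert.1 (h x hxS)).resolve_left fun hc => hno ⟨x, ⟨hxS, hc⟩, hx⟩

/-! ### Embedding the limit in an extensive set -/

/-- Choosing a sequence in which each term meets a condition on its predecessors. -/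
theorem exists_seq {α : Type*} (C : ∀ n : ℕ, (∀ m, m < n → α) → α → Prop)
    (h : ∀ n g, ∃ x, C n g x) : ∃ f : ℕ → α, ∀ n, C n (fun m _ => f m) (f n) := by
  choose s hs using h
  refine ⟨WellFounded.fix (C := fun _ => α) Nat.lt_wfRel.wf s, fun n => ?_⟩
  conv => arg 3; rw [WellFounded.fix_eq]
  exact hs _ _

theorem IsExtensive.exists_embedding [L.IsRelational]
    (harity : ∀ n, n < 2 → IsEmpty (L.Relations n)) [Countable M] [Infinite M]
    (hloop : NoLoops (L := L) M) {S : Set M} (hS : IsExtensive L S) :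
    ∃ f : M ↪[L] M, ∀ x, f x ∈ S := by
  classical
  obtain ⟨e⟩ : Nonempty (ℕ ≃ M) := nonempty_equiv_of_countable
  -- `code n g s` describes the tuple `s` of indices `≤ n`, with `n` the new point
  let code (n : ℕ) (g : ∀ m, m < n → S) {r : ℕ} (s : Fin r → ℕ) : Fin r → Option M :=
    fun i => if h : s i < n then some (g (s i) h : M) else none
  let P (n : ℕ) (g : ∀ m, m < n → S) : PreType L M := fun r R t =>
    ∃ s : Fin r → ℕ, (∀ i, s i ≤ n) ∧ t = code n g s ∧ RelMap R (e ∘ s)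
  let A (n : ℕ) (g : ∀ m, m < n → S) : Finset M :=
    Finset.univ.image fun m : Fin n => (g m m.2 : M)
  obtain ⟨f, hf⟩ := exists_seq (α := S) (fun n g x => Realizes (A n g) (P n g) (x : M)) (by
    intro n g
    obtain ⟨x, hx, h⟩ := hS (A n g) (P n g) (by
      intro y hy
      obtain ⟨m, -, rfl⟩ := Finset.mem_image.1 (Finset.mem_coe.1 hy)
      exact (g m m.2).2)
    exact ⟨⟨x, hx⟩, h⟩)
  have hne : ∀ m n, m < n → (f m : M) ≠ f n := by
    intro m n hmn heq
    refine (hf n).1 ?_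
    rw [← heq]
    exact Finset.mem_image.2 ⟨⟨m, hmn⟩, Finset.mem_univ _, rfl⟩
  have finj : Function.Injective fun n => (f n : M) := by
    intro m n h
    rcases lt_trichotomy m n with hlt | rfl | hlt
    · exact (hne _ _ hlt h).elim
    · rfl
    · exact (hne _ _ hlt h.symm).elim
  have code_inj : ∀ n {r : ℕ} (s s' : Fin r → ℕ), (∀ i, s i ≤ n) → (∀ i, s' i ≤ n) →
      ∀ i j, code n (fun m _ => f m) s i = code n (fun m _ => f m) s' j → s i = s' j := by
    intro n r s s' hs hs' i j h
    have := hs i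
    have := hs' j
    simp only [code] at h
    split_ifs at h with h1 h2
    · exact finj (Option.some_injective _ h)
    · omega
  have hrel : ∀ {r : ℕ} (R : L.Relations r) (s : Fin r → ℕ), Function.Injective s →
      (RelMap R (fun i => (f (s i) : M)) ↔ RelMap R (e ∘ s)) := by
    intro r R s hs
    have hr : 0 < r := by
      by_contra h
      exact (harity r (by omega)).false R
    have : Nonempty (Fin r) := ⟨⟨0, hr⟩⟩
    -- the largest index plays the role of the new point
    obtain ⟨j, hj⟩ := Finite.exists_max s
    have key := (hf (s j)).2 r R (code (s j) (fun m _ => f m) s)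
      (fun i i' h => hs (code_inj _ s s hj hj i i' h)) ⟨j, by simp [code]⟩ (by
        intro i m h
        simp only [code] at h
        split_ifs at h with h1
        rw [← Option.some_injective _ h]
        exact Finset.mem_image.2 ⟨⟨s i, h1⟩, Finset.mem_univ _, rfl⟩)
    have e1 : (fun i => (code (s j) (fun m _ => f m) s i).getD (f (s j) : M))
        = fun i => (f (s i) : M) := by
      funext i
      simp only [code]
      split_ifs with h1
      · rfl
      · have := hj i
        rw [show s i = s j by omega]
        rfl
    rw [e1] at key
    rw [key]
    constructor
    · rintro ⟨s', hs', h, h'⟩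
      obtain rfl : s = s' := funext fun i => code_inj _ s s' hj hs' i i (congrFun h i)
      exact h'
    · exact fun h => ⟨s, hj, rfl, h⟩
  refine ⟨⟨⟨fun x => f (e.symm x), finj.comp e.symm.injective⟩, fun F => isEmptyElim F, ?_⟩,
    fun x => (f (e.symm x)).2⟩
  intro r R t
  change RelMap R (fun i => (f (e.symm (t i)) : M)) ↔ RelMap R t
  have et : e ∘ (e.symm ∘ t) = t := by
    funext i
    simp
  have main : Function.Injective t →
      (RelMap R (fun i => (f (e.symm (t i)) : M)) ↔ RelMap R t) := by
    intro ht
    have := hrel R (e.symm ∘ t) (e.symm.injective.comp ht)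
    rwa [et] at this
  constructor
  · intro h
    exact (main (Function.Injective.of_comp (f := fun x => (f (e.symm x) : M))
      (hloop R _ h))).1 h
  · intro h
    exact (main (hloop R t h)).2 h

end Extensive

end CDP

/-- The class of all finite `L`-structures with no loops (relations hold only on
tuples of pairwise distinct elements), for a finite relational language `L` all of whose
symbols have arity at least two, is a Fraïssé class, and every Fraïssé limit of it is
indivisible. -/
theorem unrestricted_class_isFraisse_and_indivisible
    (L : FirstOrder.Language.{u, v}) [L.IsRelational]
    (hfin : Finite (Σ n, L.Relations n))
    (harity : ∀ n, n < 2 → IsEmpty (L.Relations n)) :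
    CDP.IsFraisseClass
      { N : CategoryTheory.Bundled.{w} L.Structure | Finite N ∧ CDP.NoLoops (L := L) N } ∧
    ∀ (M : Type w) [L.Structure M],
      CDP.IsFraisseLimitOf
        { N : CategoryTheory.Bundled.{w} L.Structure | Finite N ∧ CDP.NoLoops (L := L) N } M →
      ∀ k : ℕ, 1 ≤ k → ∀ c : M → Fin k,
        ∃ f : M ↪[L] M, ∃ i : Fin k, ∀ x : M, c (f x) = i := by
  refine ⟨CDP.isFraisseClass harity, fun M _ hM k _ c => ?_⟩
  have : Countable M := hM.1
  have : Infinite M := hM.2.1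
  obtain ⟨T, i, hT, hc⟩ := hM.isExtensive_univ.exists_monochromatic harity c Finset.univ
    Set.univ (fun x _ => Finset.mem_univ _)
  obtain ⟨f, hf⟩ := hT.exists_embedding harity hM.noLoops
  exact ⟨f, i, fun x => hc _ (hf x)⟩
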